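/- Let q ≥ 2 be a prime power and let δ ∈ (0, 1 − 1/q) be a constant. Then there exists a constant h_δ ∈ (0,1), depending only on q and δ, such that for all sufficiently large n the following holds: for every integer ℓ with 2 ≤ ℓ ≤ n, if v_1, …, v_ℓ are independent random vectors each distributed uniformly in the Hamming ball B_q(n, ⌊δn⌋) ⊆ 𝔽_q^n, then the probability that v_1 + v_2 + ⋯ + v_ℓ ∈ B_q(n, ⌊δn⌋) is at most 2^{−h_δ n}. -/

import Mathlib

open Finset
open scoped Classical

/-- The Hamming ball of radius `r` in `F^n`. -/
noncomputable def hammingBall (F : Type) [Fintype F] [Zero F] [DecidableEq F] (n r : ℕ) :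
    Finset (Fin n → F) :=
  Finset.univ.filter fun x => hammingNorm x ≤ r

/-!
Write `k = ⌊δn⌋` and choose `s ∈ (0, 1)` such that under the product measure on `F ^ n` with
density proportional to `s ^ (2 * hammingNorm x)` the expected weight is `δn`. Then `k` is, up to a
constant factor, the mode of the weight distribution, so the ball of radius `k` has at least
`Z ^ n / s ^ (2 * k)` elements up to a factor linear in `n`, where `Z = 1 + (q - 1) * s ^ 2`.

Fix all but two of the summands, and let `z` be their sum. On the pairs `(x, y)` with `x`, `y` and
`x + y + z` in the ball, the weight `s ^ (|x| + |x + y + z| + 2 * |y|)` is at least `s ^ (4 * k)`.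
The total weight of all pairs factors over the coordinates, and AM-GM applied to `x` and
`x + y + z`, strict since `s ≠ 1`, bounds each factor by `Z ^ 2` minus a positive constant.
Hence the fraction of such pairs in the square of the ball decays exponentially.
-/

section Asymptotics

open Asymptotics Filter Topology

lemma exists_eventually_mul_pow_le_two_rpow_neg {σ : ℝ} (hσ0 : 0 ≤ σ) (hσ1 : σ < 1)
    (C : ℝ) (d : ℕ) :
    ∃ h : ℝ, 0 < h ∧ h < 1 ∧ ∀ᶠ n : ℕ in atTop,
      C * (n + 1 : ℝ) ^ d * σ ^ n ≤ (2 : ℝ) ^ (-(h * n)) := by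
  have hlim : Tendsto (fun h : ℝ => (2 : ℝ) ^ (-h)) (𝓝[>] 0) (𝓝 1) := by
    have hcont : Continuous fun h : ℝ => (2 : ℝ) ^ (-h) :=
      continuous_const.rpow continuous_neg fun _ => .inl two_ne_zero
    simpa using (hcont.tendsto 0).mono_left nhdsWithin_le_nhds
  obtain ⟨h, hσh, hh0, hh1⟩ :=
    ((hlim.eventually (lt_mem_nhds hσ1)).and (Ioo_mem_nhdsGT one_pos)).exists
  have hsucc : (fun n : ℕ => (n + 1 : ℝ)) =O[atTop] fun n : ℕ => (n : ℝ) :=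
    .of_bound 2 <| (eventually_ge_atTop 1).mono fun n hn => by
      rw [Real.norm_of_nonneg (by positivity), Real.norm_natCast]
      linarith [(mod_cast hn : (1 : ℝ) ≤ n)]
  have hdecay : (fun n : ℕ => C * (n + 1 : ℝ) ^ d * σ ^ n) =o[atTop]
      fun n => ((2 : ℝ) ^ (-h)) ^ n :=
    (((hsucc.pow d).const_mul_left C).mul (isBigO_refl _ _)).trans_isLittleO
      (isLittleO_pow_const_mul_const_pow_const_pow_of_norm_lt d
        ((Real.norm_of_nonneg hσ0).trans_lt hσh))
  refine ⟨h, hh0, hh1, (hdecay.bound one_pos).mono fun n hn => ?_⟩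
  calc C * (n + 1 : ℝ) ^ d * σ ^ n ≤ ‖C * (n + 1 : ℝ) ^ d * σ ^ n‖ := Real.le_norm_self _
    _ ≤ ((2 : ℝ) ^ (-h)) ^ n := by
        rwa [one_mul, Real.norm_of_nonneg (by positivity : 0 ≤ ((2 : ℝ) ^ (-h)) ^ n)] at hn
    _ = (2 : ℝ) ^ (-(h * n)) := by rw [← Real.rpow_mul_natCast two_pos.le, neg_mul]

end Asymptotics

section BinomialMode

lemma choose_succ_mul_pow_succ_mul {R : Type*} [CommRing R] (r : R) (n j : ℕ) :
    (n.choose (j + 1) * r ^ (j + 1)) * (j + 1) = (n.choose j * r ^ j) * (r * (n - j)) := by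
  have hchoose : (n.choose (j + 1) : R) * (j + 1) = n.choose j * (n - j) := by
    obtain hj | hj := le_or_gt j n
    · rw [← Nat.cast_sub hj]
      exact_mod_cast congrArg (Nat.cast : ℕ → R) (Nat.choose_succ_right_eq n j)
    · simp [Nat.choose_eq_zero_of_lt hj, Nat.choose_eq_zero_of_lt (hj.trans j.lt_succ_self)]
  linear_combination r ^ (j + 1) * hchoose

variable {r : ℝ} {n k : ℕ}

lemma choose_mul_pow_le_of_le_mode (hr : 0 ≤ r) (hk : k ≤ r * (n - k)) {j : ℕ} (hj : j ≤ k) :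
    n.choose j * r ^ j ≤ n.choose k * r ^ k := by
  induction hj using Nat.decreasingInduction with
  | self => rfl
  | of_succ i hi ih =>
    refine le_trans ?_ ih
    have hik : (i : ℝ) + 1 ≤ k := mod_cast hi
    have hratio : (i : ℝ) + 1 ≤ r * (n - i) := by nlinarith
    refine le_of_mul_le_mul_right ?_ i.cast_add_one_pos
    rw [choose_succ_mul_pow_succ_mul]
    gcongr

lemma choose_mul_pow_le_of_mode_le (hr : 0 ≤ r) (hk : r * (n - k) ≤ k + 1) {j : ℕ} (hj : k ≤ j) :
    n.choose j * r ^ j ≤ n.choose k * r ^ k := by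
  induction j, hj using Nat.le_induction with
  | base => rfl
  | succ i hi ih =>
    refine le_trans ?_ ih
    have hik : (k : ℝ) ≤ i := mod_cast hi
    have hratio : r * (n - i) ≤ (i : ℝ) + 1 := by nlinarith
    refine le_of_mul_le_mul_right ?_ i.cast_add_one_pos
    rw [choose_succ_mul_pow_succ_mul]
    gcongr

/- The mode of the binomial distribution with odds `r` is `⌊(n + 1) * r / (1 + r)⌋`, which may
exceed `k = ⌊n * r / (1 + r)⌋` by one; this is what the factor `1 + r` pays for. -/
lemma choose_mul_pow_le_of_near_mode (hr : 0 ≤ r) (hk : k ≤ r * (n - k))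
    (hk' : r * (n - (k + 1)) ≤ k + 1) (j : ℕ) :
    n.choose j * r ^ j ≤ (1 + r) * (n.choose k * r ^ k) := by
  obtain hj | hj := le_or_gt j k
  · exact (choose_mul_pow_le_of_le_mode hr hk hj).trans
      (le_mul_of_one_le_left (by positivity) (by linarith))
  calc n.choose j * r ^ j ≤ n.choose (k + 1) * r ^ (k + 1) :=
        choose_mul_pow_le_of_mode_le hr (by push_cast; linarith) hj
    _ ≤ (1 + r) * (n.choose k * r ^ k) := by
        refine le_of_mul_le_mul_right ?_ k.cast_add_one_pos
        rw [choose_succ_mul_pow_succ_mul, mul_comm (1 + r), mul_assoc _ (1 + r)]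
        refine mul_le_mul_of_nonneg_left ?_ (by positivity)
        nlinarith [mul_nonneg hr k.cast_nonneg]

lemma one_add_pow_le_of_near_mode (hr : 0 ≤ r) (hk : k ≤ r * (n - k))
    (hk' : r * (n - (k + 1)) ≤ k + 1) :
    (1 + r) ^ n ≤ (n + 1) * (1 + r) * (n.choose k * r ^ k) := by
  calc (1 + r) ^ n = ∑ j ∈ range (n + 1), n.choose j * r ^ j := by
        simp [add_comm 1 r, add_pow, mul_comm]
    _ ≤ ∑ _j ∈ range (n + 1), (1 + r) * (n.choose k * r ^ k) :=
        sum_le_sum fun j _ => choose_mul_pow_le_of_near_mode hr hk hk' j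
    _ = (n + 1) * (1 + r) * (n.choose k * r ^ k) := by simp [mul_assoc]

lemma floor_mul_near_mode {δ : ℝ} (hδ0 : 0 ≤ δ) (hδ1 : δ < 1) (hr : r * (1 - δ) = δ) (n : ℕ) :
    ⌊δ * n⌋₊ ≤ r * (n - ⌊δ * n⌋₊) ∧ r * (n - (⌊δ * n⌋₊ + 1)) ≤ ⌊δ * n⌋₊ + 1 := by
  have hle : (⌊δ * n⌋₊ : ℝ) ≤ δ * n := Nat.floor_le (by positivity)
  have hlt : δ * n < ⌊δ * n⌋₊ + 1 := Nat.lt_floor_add_one _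
  have hpos : 0 < 1 - δ := sub_pos.2 hδ1
  constructor <;> refine le_of_mul_le_mul_right ?_ hpos
  · linear_combination hle - (n - ⌊δ * n⌋₊ : ℝ) * hr
  · linear_combination hlt + (n - (⌊δ * n⌋₊ + 1) : ℝ) * hr

end BinomialMode

section BallVolume

lemma card_filter_support_eq {ι F : Type*} [Fintype ι] [DecidableEq ι] [Fintype F] [Zero F]
    [DecidableEq F] (S : Finset ι) :
    #{x : ι → F | ({i | x i ≠ 0} : Finset ι) = S} = (Fintype.card F - 1) ^ #S := by
  have hpi : ({x : ι → F | ({i | x i ≠ 0} : Finset ι) = S} : Finset (ι → F)) =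
      Fintype.piFinset fun i => if i ∈ S then univ.erase 0 else {0} := by
    ext x
    simp only [mem_filter_univ, Finset.ext_iff, Fintype.mem_piFinset]
    refine forall_congr' fun i => ?_
    by_cases hi : i ∈ S <;> simp [hi]
  rw [hpi, Fintype.card_piFinset]
  simp [apply_ite Finset.card]

lemma card_filter_hammingNorm_eq {ι F : Type*} [Fintype ι] [DecidableEq ι] [Fintype F] [Zero F]
    [DecidableEq F] (k : ℕ) :
    #{x : ι → F | hammingNorm x = k} = (Fintype.card ι).choose k * (Fintype.card F - 1) ^ k := by
  have hfiber : ∀ S ∈ powersetCard k (univ : Finset ι),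
      #{x ∈ ({x : ι → F | hammingNorm x = k} : Finset _) | ({i | x i ≠ 0} : Finset ι) = S} =
        (Fintype.card F - 1) ^ k := by
    intro S hS
    rw [← (mem_powersetCard.1 hS).2, ← card_filter_support_eq S, filter_filter]
    congr 1 with x
    simp only [mem_filter_univ, and_iff_right_iff_imp]
    rintro rfl
    rfl
  rw [card_eq_sum_card_fiberwise (f := fun x : ι → F => ({i | x i ≠ 0} : Finset ι))
      (t := powersetCard k univ)
      fun x hx => by simpa [mem_powersetCard, hammingNorm] using hx,
    sum_congr rfl hfiber]
  simp

variable {F : Type} [Fintype F] [Zero F] [DecidableEq F]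

@[simp]
lemma mem_hammingBall {n r : ℕ} {x : Fin n → F} : x ∈ hammingBall F n r ↔ hammingNorm x ≤ r := by
  simp [hammingBall]

lemma choose_mul_pow_le_card_hammingBall (n k : ℕ) :
    n.choose k * (Fintype.card F - 1) ^ k ≤ #(hammingBall F n k) := by
  calc n.choose k * (Fintype.card F - 1) ^ k = #{x : Fin n → F | hammingNorm x = k} := by
        rw [card_filter_hammingNorm_eq, Fintype.card_fin]
    _ ≤ #(hammingBall F n k) := card_le_card fun x hx => by simp_all

lemma one_add_pow_le_card_hammingBall_mul {t : ℝ} (ht : 0 ≤ t) {n k : ℕ}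
    (hk : k ≤ (Fintype.card F - 1) * t * (n - k))
    (hk' : (Fintype.card F - 1) * t * (n - (k + 1)) ≤ k + 1) :
    (1 + (Fintype.card F - 1) * t) ^ n ≤
      (n + 1) * (1 + (Fintype.card F - 1) * t) * (#(hammingBall F n k) * t ^ k) := by
  have hF : 1 ≤ Fintype.card F := Fintype.card_pos
  have hF' : (0 : ℝ) ≤ Fintype.card F - 1 := sub_nonneg.2 (mod_cast hF)
  have hvol : (n.choose k : ℝ) * (Fintype.card F - 1) ^ k ≤ #(hammingBall F n k) := by
    have := choose_mul_pow_le_card_hammingBall (F := F) n k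
    rify [hF] at this
    exact this
  refine (one_add_pow_le_of_near_mode (by positivity) hk hk').trans ?_
  rw [mul_pow, ← mul_assoc (n.choose k : ℝ)]
  gcongr

end BallVolume

section CoordWeight

/-- The weight `s ^ [a ≠ 0]` of a single coordinate, whose product over the coordinates of `x` is
`s ^ hammingNorm x`. -/
def coordWeight {F : Type*} [Zero F] [DecidableEq F] (s : ℝ) (a : F) : ℝ := if a = 0 then 1 else s

lemma prod_coordWeight {ι F : Type*} [Fintype ι] [Zero F] [DecidableEq F] (s : ℝ) (x : ι → F) :
    ∏ i, coordWeight s (x i) = s ^ hammingNorm x := by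
  simp [coordWeight, hammingNorm, prod_ite]

lemma coordWeight_nonneg {F : Type*} [Zero F] [DecidableEq F] {s : ℝ} (hs : 0 ≤ s) (a : F) :
    0 ≤ coordWeight s a := by
  unfold coordWeight; positivity

lemma le_coordWeight {F : Type*} [Zero F] [DecidableEq F] {s : ℝ} (hs : s ≤ 1) (a : F) :
    s ≤ coordWeight s a := by
  unfold coordWeight; split_ifs <;> simp [hs]

lemma sum_coordWeight_sq {F : Type*} [Zero F] [Fintype F] [DecidableEq F] (s : ℝ) :
    ∑ a : F, coordWeight s a ^ 2 = 1 + (Fintype.card F - 1) * s ^ 2 := by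
  have hF : 1 ≤ Fintype.card F := Fintype.card_pos
  simp [coordWeight, ite_pow, sum_ite, filter_ne', filter_eq', Nat.cast_sub hF]

variable {F : Type*} [AddCommGroup F] [DecidableEq F]

/-- The weight `s ^ ([a ≠ 0] + [a + b + c ≠ 0] + 2 * [b ≠ 0])` of a pair of coordinates. Squaring
only the factor of `b` leaves the other two factors to AM-GM. -/
def pairWeight (s : ℝ) (c a b : F) : ℝ :=
  coordWeight s b ^ 2 * (coordWeight s a * coordWeight s (a + (b + c)))

lemma pairWeight_nonneg {s : ℝ} (hs : 0 ≤ s) (c a b : F) : 0 ≤ pairWeight s c a b :=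
  mul_nonneg (sq_nonneg _) (mul_nonneg (coordWeight_nonneg hs _) (coordWeight_nonneg hs _))

lemma prod_pairWeight {ι : Type*} [Fintype ι] (s : ℝ) (z x y : ι → F) :
    ∏ i, pairWeight s (z i) (x i) (y i) =
      (s ^ hammingNorm y) ^ 2 * (s ^ hammingNorm x * s ^ hammingNorm (x + y + z)) := by
  simp only [pairWeight, prod_mul_distrib, prod_pow, ← prod_coordWeight, Pi.add_apply, add_assoc]

variable [Fintype F]

lemma sum_coordWeight_mul_add_le (s : ℝ) (z : F) :
    ∑ a, coordWeight s a * coordWeight s (a + z) ≤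
      1 + (Fintype.card F - 1) * s ^ 2 - (1 - coordWeight s z) ^ 2 / 2 := by
  have hshift : ∑ a : F, coordWeight s (a + z) ^ 2 = 1 + (Fintype.card F - 1) * s ^ 2 := by
    rw [← sum_coordWeight_sq, ← Equiv.sum_comp (Equiv.addRight z) fun a => coordWeight s a ^ 2]
    rfl
  have hdefect : (1 - coordWeight s z) ^ 2 ≤
      ∑ a : F, (coordWeight s a - coordWeight s (a + z)) ^ 2 := by
    simpa [coordWeight] using single_le_sum
      (f := fun a : F => (coordWeight s a - coordWeight s (a + z)) ^ 2)
      (fun a _ => sq_nonneg _) (mem_univ 0)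
  have hpolar : ∑ a : F, (coordWeight s a - coordWeight s (a + z)) ^ 2 =
      ∑ a : F, coordWeight s a ^ 2 + ∑ a : F, coordWeight s (a + z) ^ 2 -
        2 * ∑ a : F, coordWeight s a * coordWeight s (a + z) := by
    rw [mul_sum, ← sum_add_distrib, ← sum_sub_distrib]
    exact sum_congr rfl fun a _ => by ring
  rw [hshift, sum_coordWeight_sq] at hpolar
  linarith

lemma sum_pairWeight_le [Nontrivial F] {s : ℝ} (hs0 : 0 ≤ s) (hs1 : s ≤ 1) (c : F) :
    ∑ b, ∑ a, pairWeight s c a b ≤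
      (1 + (Fintype.card F - 1) * s ^ 2) ^ 2 - s ^ 2 * (1 - s) ^ 2 / 2 := by
  set Z : ℝ := 1 + (Fintype.card F - 1) * s ^ 2
  obtain ⟨b₀, hb₀⟩ := exists_ne (-c)
  have hdefect : s ^ 2 * (1 - s) ^ 2 ≤
      ∑ b, coordWeight s b ^ 2 * (1 - coordWeight s (b + c)) ^ 2 := by
    calc s ^ 2 * (1 - s) ^ 2 ≤ coordWeight s b₀ ^ 2 * (1 - coordWeight s (b₀ + c)) ^ 2 := by
          rw [coordWeight.eq_def s (b₀ + c), if_neg (mt eq_neg_of_add_eq_zero_left hb₀)]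
          gcongr
          exact le_coordWeight hs1 b₀
      _ ≤ _ := single_le_sum (f := fun b => coordWeight s b ^ 2 * (1 - coordWeight s (b + c)) ^ 2)
          (fun b _ => by positivity) (mem_univ b₀)
  calc ∑ b, ∑ a, pairWeight s c a b
      ≤ ∑ b, coordWeight s b ^ 2 * (Z - (1 - coordWeight s (b + c)) ^ 2 / 2) := by
        simp only [pairWeight, ← mul_sum]
        gcongr with b
        exact sum_coordWeight_mul_add_le s (b + c)
    _ = Z ^ 2 - (∑ b, coordWeight s b ^ 2 * (1 - coordWeight s (b + c)) ^ 2) / 2 := by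
        simp only [mul_sub, sum_sub_distrib, ← sum_mul, sum_coordWeight_sq, mul_div_assoc',
          ← sum_div, sq Z, Z]
    _ ≤ Z ^ 2 - s ^ 2 * (1 - s) ^ 2 / 2 := by gcongr

lemma sum_prod_pairWeight_le {ι : Type*} [Fintype ι] [DecidableEq ι] {s A : ℝ} (hs : 0 ≤ s)
    (hA : ∀ c : F, ∑ b, ∑ a, pairWeight s c a b ≤ A) (z : ι → F) :
    ∑ p : (ι → F) × (ι → F), ∏ i, pairWeight s (z i) (p.1 i) (p.2 i) ≤ A ^ Fintype.card ι := by
  calc ∑ p : (ι → F) × (ι → F), ∏ i, pairWeight s (z i) (p.1 i) (p.2 i)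
      = ∏ i, ∑ b, ∑ a, pairWeight s (z i) a b := by
        simp_rw [Fintype.sum_prod_type_right, Fintype.prod_sum]
    _ ≤ ∏ _i : ι, A := prod_le_prod
        (fun i _ => sum_nonneg fun b _ => sum_nonneg fun a _ => pairWeight_nonneg hs _ a b)
        fun i _ => hA (z i)
    _ = A ^ Fintype.card ι := by simp

end CoordWeight

section EscapeRate

/-- The factor lost per coordinate: for `q = |F|`, the bound of `sum_pairWeight_le` divided by
`(1 + (q - 1) * s ^ 2) ^ 2`. -/
noncomputable def escapeRate (q s : ℝ) : ℝ :=
  1 - s ^ 2 * (1 - s) ^ 2 / (2 * (1 + (q - 1) * s ^ 2) ^ 2)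

variable {q s : ℝ}

lemma one_le_one_add_sub_one_mul_sq (hq : 1 ≤ q) : 1 ≤ 1 + (q - 1) * s ^ 2 :=
  le_add_of_nonneg_right (mul_nonneg (sub_nonneg.2 hq) (sq_nonneg s))

lemma escapeRate_mul_sq (hq : 1 ≤ q) :
    escapeRate q s * (1 + (q - 1) * s ^ 2) ^ 2 =
      (1 + (q - 1) * s ^ 2) ^ 2 - s ^ 2 * (1 - s) ^ 2 / 2 := by
  have hZ := (one_pos.trans_le (one_le_one_add_sub_one_mul_sq (s := s) hq)).ne'
  unfold escapeRate
  generalize 1 + (q - 1) * s ^ 2 = Z at hZ ⊢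
  field_simp

lemma escapeRate_nonneg (hq : 1 ≤ q) (hs0 : 0 ≤ s) (hs1 : s ≤ 1) : 0 ≤ escapeRate q s := by
  have hZ : 1 ≤ (1 + (q - 1) * s ^ 2) ^ 2 := one_le_pow₀ (one_le_one_add_sub_one_mul_sq hq)
  have hnum : s ^ 2 * (1 - s) ^ 2 ≤ 1 :=
    mul_le_one₀ (pow_le_one₀ hs0 hs1) (sq_nonneg _)
      (pow_le_one₀ (sub_nonneg.2 hs1) (sub_le_self 1 hs0))
  refine sub_nonneg.2 (div_le_one_of_le₀ ?_ ?_) <;> linarith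

lemma escapeRate_lt_one (hq : 1 ≤ q) (hs0 : 0 < s) (hs1 : s < 1) : escapeRate q s < 1 := by
  have hZ := one_pos.trans_le (one_le_one_add_sub_one_mul_sq (s := s) hq)
  have hs : 0 < 1 - s := sub_pos.2 hs1
  exact sub_lt_self 1 (by positivity)

/- The equation says that a coordinate distributed proportionally to `coordWeight s a ^ 2` is
nonzero with odds `δ / (1 - δ)`, that is, with probability `δ`. -/
lemma exists_odds_mul_eq {δ : ℝ} (hq : 1 < q) (hδ0 : 0 < δ) (hδ1 : δ < 1 - 1 / q) :
    ∃ s, 0 < s ∧ s < 1 ∧ (q - 1) * s ^ 2 * (1 - δ) = δ := by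
  have hq0 : 0 < q - 1 := sub_pos.2 hq
  have hδ : 0 < 1 - δ := by linarith [one_div_pos.2 (one_pos.trans hq)]
  have hlt : δ < (q - 1) * (1 - δ) := by
    have : δ * q < (1 - 1 / q) * q := by gcongr
    rw [sub_mul, one_div_mul_cancel (by positivity)] at this
    linarith
  refine ⟨√(δ / ((q - 1) * (1 - δ))), by positivity, ?_, ?_⟩
  · rwa [Real.sqrt_lt' one_pos, one_pow, div_lt_one (by positivity)]
  · rw [Real.sq_sqrt (by positivity)]
    field_simp

end EscapeRate

section BallPairs

/-- The pairs of elements of the Hamming ball of radius `k` whose sum, translated by `z`, stays in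
the ball. -/
noncomputable def ballPairs (F : Type) [AddCommGroup F] [Fintype F] [DecidableEq F] (n k : ℕ)
    (z : Fin n → F) : Finset ((Fin n → F) × (Fin n → F)) :=
  {p ∈ hammingBall F n k ×ˢ hammingBall F n k | p.1 + p.2 + z ∈ hammingBall F n k}

variable {F : Type} [AddCommGroup F] [Fintype F] [DecidableEq F]

lemma card_ballPairs_mul_le [Nontrivial F] {s : ℝ} (hs0 : 0 ≤ s) (hs1 : s ≤ 1) (n k : ℕ)
    (z : Fin n → F) :
    #(ballPairs F n k z) * ((s ^ 2) ^ k) ^ 2 ≤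
      ((1 + (Fintype.card F - 1) * s ^ 2) ^ 2 - s ^ 2 * (1 - s) ^ 2 / 2) ^ n := by
  have hweight : ∀ p ∈ ballPairs F n k z,
      ((s ^ 2) ^ k) ^ 2 ≤ ∏ i, pairWeight s (z i) (p.1 i) (p.2 i) := by
    intro p hp
    simp only [ballPairs, mem_filter, mem_product, mem_hammingBall] at hp
    obtain ⟨⟨hx, hy⟩, hxyz⟩ := hp
    rw [prod_pairWeight]
    calc ((s ^ 2) ^ k) ^ 2 = (s ^ k) ^ 2 * (s ^ k * s ^ k) := by ring
      _ ≤ _ := by gcongr ?_ ^ 2 * (?_ * ?_) <;> exact pow_le_pow_of_le_one hs0 hs1 ‹_›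
  calc #(ballPairs F n k z) * ((s ^ 2) ^ k) ^ 2
      ≤ ∑ p ∈ ballPairs F n k z, ∏ i, pairWeight s (z i) (p.1 i) (p.2 i) := by
        simpa using card_nsmul_le_sum _ _ _ hweight
    _ ≤ ∑ p : (Fin n → F) × (Fin n → F), ∏ i, pairWeight s (z i) (p.1 i) (p.2 i) :=
        sum_le_univ_sum_of_nonneg fun p => prod_nonneg fun i _ => pairWeight_nonneg hs0 _ _ _
    _ ≤ _ := by
        simpa using sum_prod_pairWeight_le hs0 (sum_pairWeight_le hs0 hs1) z

lemma card_ballPairs_le [Nontrivial F] {s : ℝ} (hs0 : 0 < s) (hs1 : s ≤ 1) {n k : ℕ}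
    (hk : k ≤ (Fintype.card F - 1) * s ^ 2 * (n - k))
    (hk' : (Fintype.card F - 1) * s ^ 2 * (n - (k + 1)) ≤ k + 1) (z : Fin n → F) :
    #(ballPairs F n k z) ≤
      (1 + (Fintype.card F - 1) * s ^ 2) ^ 2 * (n + 1) ^ 2 * escapeRate (Fintype.card F) s ^ n *
        #(hammingBall F n k) ^ 2 := by
  have hq : (1 : ℝ) ≤ Fintype.card F := mod_cast Fintype.card_pos
  have hrate := escapeRate_nonneg hq hs0.le hs1
  have hpairs := card_ballPairs_mul_le hs0.le hs1 n k z
  have hvol := one_add_pow_le_card_hammingBall_mul (sq_nonneg s) hk hk'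
  rw [← escapeRate_mul_sq hq] at hpairs
  set Z : ℝ := 1 + (Fintype.card F - 1) * s ^ 2
  have hZ0 : 0 ≤ Z := zero_le_one.trans (one_le_one_add_sub_one_mul_sq hq)
  refine le_of_mul_le_mul_right ?_ (by positivity : 0 < ((s ^ 2) ^ k) ^ 2)
  calc #(ballPairs F n k z) * ((s ^ 2) ^ k) ^ 2
      ≤ (escapeRate (Fintype.card F) s * Z ^ 2) ^ n := hpairs
    _ = escapeRate (Fintype.card F) s ^ n * (Z ^ n) ^ 2 := by rw [mul_pow, pow_right_comm]
    _ ≤ escapeRate (Fintype.card F) s ^ n *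
          ((n + 1) * Z * (#(hammingBall F n k) * (s ^ 2) ^ k)) ^ 2 := by gcongr
    _ = Z ^ 2 * (n + 1) ^ 2 * escapeRate (Fintype.card F) s ^ n * #(hammingBall F n k) ^ 2 *
          ((s ^ 2) ^ k) ^ 2 := by ring

lemma card_filter_sum_mem_hammingBall_le {n k : ℕ} {C : ℝ}
    (hC : ∀ z, #(ballPairs F n k z) ≤ C) (m : ℕ) :
    (#{v : Fin (m + 2) → Fin n → F |
        (∀ i, v i ∈ hammingBall F n k) ∧ ∑ i, v i ∈ hammingBall F n k} : ℝ) ≤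
      C * #(hammingBall F n k) ^ m := by
  set V : Finset (Fin (m + 2) → Fin n → F) :=
    {v | (∀ i, v i ∈ hammingBall F n k) ∧ ∑ i, v i ∈ hammingBall F n k}
  set U : Finset (Fin m → Fin n → F) := Fintype.piFinset fun _ => hammingBall F n k
  have hmaps : ∀ v ∈ V, Fin.tail (Fin.tail v) ∈ U := fun v hv =>
    Fintype.mem_piFinset.2 fun i => ((mem_filter_univ _).1 hv).1 i.succ.succ
  have hfiber : ∀ u, #{v ∈ V | Fin.tail (Fin.tail v) = u} ≤ #(ballPairs F n k (∑ i, u i)) := by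
    intro u
    refine card_le_card_of_injOn (fun v => (v 0, v 1)) (fun v hv => ?_) fun v hv w hw hvw => ?_
    · obtain ⟨⟨hmem, hsum⟩, rfl⟩ : _ ∧ Fin.tail (Fin.tail v) = u := by simpa [V] using hv
      simp only [ballPairs, mem_coe, mem_filter, mem_product, mem_hammingBall]
      refine ⟨⟨hmem 0, hmem 1⟩, ?_⟩
      simpa [Fin.sum_univ_succ, Fin.tail, add_assoc] using hsum
    · have htail := (mem_filter.1 hv).2.trans (mem_filter.1 hw).2.symm
      obtain ⟨h0, h1⟩ := Prod.mk.inj hvw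
      exact funext (Fin.cases h0 (Fin.cases h1 (congrFun htail)))
  calc (#V : ℝ) = ∑ u ∈ U, (#{v ∈ V | Fin.tail (Fin.tail v) = u} : ℝ) := by
        exact_mod_cast card_eq_sum_card_fiberwise hmaps
    _ ≤ ∑ _u ∈ U, C := sum_le_sum fun u _ => (Nat.cast_le.2 (hfiber u)).trans (hC _)
    _ = C * #(hammingBall F n k) ^ m := by simp [U, mul_comm]

theorem hammingBall_sum_escape_general (q : ℕ) (hq : 2 ≤ q) (δ : ℝ) (hδ0 : 0 < δ)
    (hδ1 : δ < 1 - 1 / (q : ℝ)) :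
    ∃ h : ℝ, 0 < h ∧ h < 1 ∧ ∃ N : ℕ, ∀ (F : Type) [AddCommGroup F] [Fintype F] [DecidableEq F],
      Fintype.card F = q → ∀ n : ℕ, N ≤ n → ∀ ℓ : ℕ, 2 ≤ ℓ →
        (#{v : Fin ℓ → Fin n → F | (∀ i, v i ∈ hammingBall F n ⌊δ * n⌋₊) ∧
            ∑ i, v i ∈ hammingBall F n ⌊δ * n⌋₊} : ℝ) ≤
          (2 : ℝ) ^ (-(h * n)) * #(hammingBall F n ⌊δ * n⌋₊) ^ ℓ := by
  have hq1 : (1 : ℝ) < q := mod_cast hq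
  have hδ : δ < 1 := hδ1.trans (sub_lt_self 1 (by positivity))
  obtain ⟨s, hs0, hs1, hmean⟩ := exists_odds_mul_eq hq1 hδ0 hδ1
  obtain ⟨h, hh0, hh1, hdecay⟩ := exists_eventually_mul_pow_le_two_rpow_neg
    (escapeRate_nonneg hq1.le hs0.le hs1.le) (escapeRate_lt_one hq1.le hs0 hs1)
    ((1 + (q - 1) * s ^ 2) ^ 2) 2
  obtain ⟨N, hN⟩ := Filter.eventually_atTop.1 hdecay
  refine ⟨h, hh0, hh1, N, fun F _ _ _ hF n hn ℓ hℓ => ?_⟩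
  subst hF
  have : Nontrivial F := Fintype.one_lt_card_iff_nontrivial.1 hq
  obtain ⟨m, rfl⟩ := Nat.exists_eq_add_of_le' hℓ
  obtain ⟨hk, hk'⟩ := floor_mul_near_mode hδ0.le hδ hmean n
  have hpairs : ∀ z, #(ballPairs F n ⌊δ * n⌋₊ z) ≤
      (2 : ℝ) ^ (-(h * n)) * #(hammingBall F n ⌊δ * n⌋₊) ^ 2 := fun z =>
    (card_ballPairs_le hs0 hs1.le hk hk' z).trans (by gcongr; exact hN n hn)
  refine (card_filter_sum_mem_hammingBall_le hpairs m).trans_eq ?_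
  rw [mul_assoc, ← pow_add, add_comm 2 m]

end BallPairs

/-- For a prime power `q ≥ 2` (realized as the cardinality of a finite field
`F`) and a constant `δ ∈ (0, 1 - 1/q)`, there is a constant `h_δ ∈ (0,1)` such that for all
sufficiently large `n` and every `ℓ` with `2 ≤ ℓ ≤ n`, the probability that the sum of `ℓ`
independent uniformly random vectors of the Hamming ball `B_q(n, ⌊δn⌋)` again lies in the ball
is at most `2^(-h_δ n)`.  (The probability is expressed by counting: the number of `ℓ`-tuples
of ball elements whose sum lies in the ball is at most `2^(-h_δ n)` times the total number of
`ℓ`-tuples of ball elements.) -/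
theorem hammingBall_sum_escape
    (q : ℕ) (hq : 2 ≤ q) (F : Type) [Field F] [Fintype F] [DecidableEq F]
    (hF : Fintype.card F = q)
    (δ : ℝ) (hδ0 : 0 < δ) (hδ1 : δ < 1 - 1 / (q : ℝ)) :
    ∃ h : ℝ, 0 < h ∧ h < 1 ∧ ∃ N : ℕ, ∀ n : ℕ, N ≤ n → ∀ ℓ : ℕ, 2 ≤ ℓ → ℓ ≤ n →
      (((Finset.univ : Finset (Fin ℓ → Fin n → F)).filter fun v =>
          (∀ i, v i ∈ hammingBall F n ⌊δ * (n : ℝ)⌋₊) ∧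
            (∑ i, v i) ∈ hammingBall F n ⌊δ * (n : ℝ)⌋₊).card : ℝ) ≤
        (2 : ℝ) ^ (-(h * (n : ℝ))) * ((hammingBall F n ⌊δ * (n : ℝ)⌋₊).card : ℝ) ^ ℓ := by
  obtain ⟨h, hh0, hh1, N, hN⟩ := hammingBall_sum_escape_general q hq δ hδ0 hδ1
  exact ⟨h, hh0, hh1, N, fun n hn ℓ hℓ _ => hN F hF n hn ℓ hℓ⟩
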